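/- Let n ≥ 3, p ∈ [2, 2n/(n−2)], s := n(1/p − 1/2 + 1/n) ∈ [0,1], τ ≥ 0, and Ω ⊂ ℝⁿ a bounded domain with first Dirichlet Laplacian eigenvalue λ₁. Then for all u ∈ H₀¹(Ω), ‖u‖_{L^p(Ω)} ≤ ((n−1)/(√n(n−2)))^{1−s} (s/(sλ₁ + τ))^{s/2} ‖u‖_V, where ‖u‖_V² = ‖∇u‖²_{L²} + τ‖u‖²_{L²}. -/

import Mathlib

open MeasureTheory

noncomputable section

/-- Rayleigh quotients of nontrivial smooth test functions compactly supported in `D`. -/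
def RayleighSet (n : ℕ) (D : Set (EuclideanSpace ℝ (Fin n))) : Set ℝ :=
  {r | ∃ u : EuclideanSpace ℝ (Fin n) → ℝ, ContDiff ℝ (⊤ : ℕ∞) u ∧ HasCompactSupport u ∧
    tsupport u ⊆ D ∧ (∫ x, (u x) ^ 2) ≠ 0 ∧
    r = (∫ x, ‖gradient u x‖ ^ 2) / (∫ x, (u x) ^ 2)}

/-- The first Dirichlet eigenvalue `λ₁(D)` of `-Δ` on `D` (variational characterization). -/
def lam1 (n : ℕ) (D : Set (EuclideanSpace ℝ (Fin n))) : ℝ := sInf (RayleighSet n D)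

/-!
The constant comes from Nirenberg's proof of the Sobolev inequality. Bounding `|v x|` by half the
integral of `|∂ᵢ v|` along each coordinate line through `x` and integrating the product with the
Loomis–Whitney inequality gives `‖v‖_{n/(n-1)} ≤ ∏ᵢ (½ ‖∂ᵢ v‖₁) ^ (1/n)`, hence
`‖v‖_{n/(n-1)} ≤ ‖∇v‖₁ / (2√n)` by AM-GM and Cauchy–Schwarz. Applied to a power `v = |u| ^ γ`, this
yields `‖u‖_{2n/(n-2)} ≤ (n-1) / (√n (n-2)) ‖∇u‖₂`. Since `1/p = s/2 + (1-s) (n-2)/(2n)`,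
interpolation bounds `‖u‖_p` by the constant to the power `1-s` times `‖u‖₂ ^ s ‖∇u‖₂ ^ (1-s)`.
Weighted AM-GM, applied to `(sλ₁ + τ)/s ‖u‖₂²` and `‖∇u‖₂²`, and `λ₁ ‖u‖₂² ≤ ‖∇u‖₂²` bound the
latter by `(s/(sλ₁ + τ)) ^ (s/2) ‖u‖_V`.
-/

section GridLines

open Finset Function
open scoped ENNReal

variable {ι : Type*} [Fintype ι] [DecidableEq ι]

theorem lmarginal_prod_lmarginal_singleton_rpow_le {A : ι → Type*} [∀ i, MeasurableSpace (A i)]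
    (μ : ∀ i, Measure (A i)) [∀ i, SigmaFinite (μ i)] {q : ℝ} (hq : 0 ≤ q)
    (hιq : ((Fintype.card ι : ℝ) - 1) * q = 1) {f : ι → (∀ i, A i) → ℝ≥0∞}
    (hf : ∀ i, Measurable (f i)) (s : Finset ι) (x : ∀ i, A i) :
    (∫⋯∫⁻_s, (fun y ↦ ∏ i, (∫⋯∫⁻_{i}, f i ∂μ) y ^ q) ∂μ) x ≤
      ∏ i, (∫⋯∫⁻_insert i s, f i ∂μ) x ^ q := by
  induction s using Finset.induction generalizing x with
  | empty => simp
  | insert k s hk ih =>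
    have hmeas : ∀ i, Measurable fun t ↦ (∫⋯∫⁻_insert i s, f i ∂μ) (update x k t) ^ q :=
      fun i ↦ (((hf i).lmarginal μ).comp (measurable_update _)).pow_const _
    have hconst : ∀ t, (∫⋯∫⁻_insert k s, f k ∂μ) (update x k t) =
        (∫⋯∫⁻_insert k s, f k ∂μ) x :=
      fun t ↦ lmarginal_update_of_mem _ (mem_insert_self k s) _ _ _
    have hcard : ∑ _i ∈ univ.erase k, q = 1 := by
      rw [sum_const, nsmul_eq_mul, cast_card_erase_of_mem (mem_univ k), card_univ, hιq]
    have hinsert : ∀ i ∈ univ.erase k, ∫⁻ t, (∫⋯∫⁻_insert i s, f i ∂μ) (update x k t) ∂μ k =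
        (∫⋯∫⁻_insert i (insert k s), f i ∂μ) x := fun i hi ↦ by
      have hki : k ∉ insert i s := by simp [hk, (ne_of_mem_erase hi).symm]
      rw [insert_comm, lmarginal_insert _ (hf i) hki]
    calc (∫⋯∫⁻_insert k s, (fun y ↦ ∏ i, (∫⋯∫⁻_{i}, f i ∂μ) y ^ q) ∂μ) x
        = ∫⁻ t, (∫⋯∫⁻_s, (fun y ↦ ∏ i, (∫⋯∫⁻_{i}, f i ∂μ) y ^ q) ∂μ) (update x k t) ∂μ k :=
          lmarginal_insert _ (measurable_fun_prod _ fun i _ ↦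
            ((hf i).lmarginal μ).pow_const _) hk _
      _ ≤ ∫⁻ t, ∏ i, (∫⋯∫⁻_insert i s, f i ∂μ) (update x k t) ^ q ∂μ k :=
          lintegral_mono fun t ↦ ih _
      _ = (∫⋯∫⁻_insert k s, f k ∂μ) x ^ q *
            ∫⁻ t, ∏ i ∈ univ.erase k, (∫⋯∫⁻_insert i s, f i ∂μ) (update x k t) ^ q ∂μ k := by
          simp_rw [← mul_prod_erase univ _ (mem_univ k), hconst]
          exact lintegral_const_mul _ (measurable_fun_prod _ fun i _ ↦ hmeas i)
      _ ≤ (∫⋯∫⁻_insert k s, f k ∂μ) x ^ q *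
            ∏ i ∈ univ.erase k, (∫⁻ t, (∫⋯∫⁻_insert i s, f i ∂μ) (update x k t) ∂μ k) ^ q := by
          gcongr
          exact ENNReal.lintegral_prod_norm_pow_le _
            (fun i _ ↦ (((hf i).lmarginal μ).comp (measurable_update _)).aemeasurable) hcard
            fun _ _ ↦ hq
      _ = ∏ i, (∫⋯∫⁻_insert i (insert k s), f i ∂μ) x ^ q := by
          rw [prod_congr rfl fun i hi ↦ by rw [hinsert i hi], ← mul_prod_erase univ _ (mem_univ k),
            insert_idem]

-- Unlike in Mathlib's `lintegral_prod_lintegral_pow_le`, each direction carries its own function.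
theorem lintegral_prod_lintegral_update_rpow_le {A : ι → Type*} [∀ i, MeasurableSpace (A i)]
    (μ : ∀ i, Measure (A i)) [∀ i, SigmaFinite (μ i)] {q : ℝ} (hq : 0 ≤ q)
    (hιq : ((Fintype.card ι : ℝ) - 1) * q = 1) {f : ι → (∀ i, A i) → ℝ≥0∞}
    (hf : ∀ i, Measurable (f i)) :
    ∫⁻ x, ∏ i, (∫⁻ t, f i (update x i t) ∂μ i) ^ q ∂.pi μ ≤ ∏ i, (∫⁻ x, f i x ∂.pi μ) ^ q := by
  rcases isEmpty_or_nonempty (∀ i, A i) with _ | ⟨⟨x⟩⟩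
  · simp [Measure.eq_zero_of_isEmpty]
  · simpa [lmarginal_univ, lmarginal_singleton] using
      lmarginal_prod_lmarginal_singleton_rpow_le μ hq hιq hf univ x

end GridLines

section LoomisWhitney

open Finset Function Set
open scoped ENNReal NNReal

variable {ι : Type*} [Fintype ι]
  {F : Type*} [NormedAddCommGroup F] [NormedSpace ℝ F] [CompleteSpace F]

theorem two_mul_enorm_le_lintegral_enorm_deriv {f : ℝ → F} (hf : ContDiff ℝ 1 f)
    (h2f : HasCompactSupport f) (x : ℝ) : 2 * ‖f x‖ₑ ≤ ∫⁻ t, ‖deriv f t‖ₑ := by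
  have hIic : ‖f x‖ₑ ≤ ∫⁻ t in Iic x, ‖deriv f t‖ₑ := h2f.enorm_le_lintegral_Ici_deriv hf x
  have hIoi : ‖f x‖ₑ ≤ ∫⁻ t in Ioi x, ‖deriv f t‖ₑ := by
    rw [← enorm_neg, ← h2f.integral_Ioi_deriv_eq hf]
    exact enorm_integral_le_lintegral_enorm _
  rw [two_mul, ← lintegral_add_compl _ (measurableSet_Iic (a := x)), compl_Iic]
  exact add_le_add hIic hIoi

theorem enorm_le_half_lintegral_enorm_fderiv_single [DecidableEq ι] {u : (ι → ℝ) → F}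
    (hu : ContDiff ℝ 1 u) (h2u : HasCompactSupport u) (x : ι → ℝ) (i : ι) :
    ‖u x‖ₑ ≤ 2⁻¹ * ∫⁻ t, ‖fderiv ℝ u (update x i t) (Pi.single i 1)‖ₑ := by
  have hderiv : ∀ t, deriv (u ∘ update x i) t = fderiv ℝ u (update x i t) (Pi.single i 1) :=
    fun t ↦ by
      rw [fderiv_comp_deriv _ (hu.differentiable one_ne_zero).differentiableAt
        (hasDerivAt_update x i t).differentiableAt, deriv_update]
  have hline := two_mul_enorm_le_lintegral_enorm_deriv (f := u ∘ update x i)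
    (hu.comp (by convert! contDiff_update 1 x i))
    (h2u.comp_isClosedEmbedding (isClosedEmbedding_update x i)) (x i)
  simp only [comp_apply, update_eq_self, hderiv] at hline
  rwa [mul_comm, ← div_eq_mul_inv, ENNReal.le_div_iff_mul_le (by simp) (by simp), mul_comm]

theorem lintegral_enorm_rpow_le_prod_lintegral_fderiv_pi [DecidableEq ι]
    (hι : 1 < Fintype.card ι) {u : (ι → ℝ) → F} (hu : ContDiff ℝ 1 u)
    (h2u : HasCompactSupport u) :
    ∫⁻ x, ‖u x‖ₑ ^ ((Fintype.card ι : ℝ) / (Fintype.card ι - 1)) ≤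
      ∏ i, (2⁻¹ * ∫⁻ x, ‖fderiv ℝ u x (Pi.single i 1)‖ₑ) ^ (1 / ((Fintype.card ι : ℝ) - 1)) := by
  have hι' : (0 : ℝ) < Fintype.card ι - 1 := sub_pos.2 (Nat.one_lt_cast.2 hι)
  have hmeas : ∀ i, Measurable fun x ↦ ‖fderiv ℝ u x (Pi.single i 1)‖ₑ := fun i ↦
    ((hu.continuous_fderiv one_ne_zero).clm_apply continuous_const).enorm.measurable
  have hmeas_line : ∀ x i, Measurable fun t ↦ ‖fderiv ℝ u (update x i t) (Pi.single i 1)‖ₑ :=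
    fun x i ↦ (hmeas i).comp (measurable_update x)
  calc ∫⁻ x, ‖u x‖ₑ ^ ((Fintype.card ι : ℝ) / (Fintype.card ι - 1))
      = ∫⁻ x, ∏ _i : ι, ‖u x‖ₑ ^ (1 / ((Fintype.card ι : ℝ) - 1)) := by
        simp_rw [prod_const, card_univ, ← ENNReal.rpow_mul_natCast, div_mul_eq_mul_div, one_mul]
    _ ≤ ∫⁻ x, ∏ i, (∫⁻ t, 2⁻¹ * ‖fderiv ℝ u (update x i t) (Pi.single i 1)‖ₑ) ^
          (1 / ((Fintype.card ι : ℝ) - 1)) := by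
        gcongr with x i
        rw [lintegral_const_mul _ (hmeas_line x i)]
        exact enorm_le_half_lintegral_enorm_fderiv_single hu h2u x i
    _ ≤ ∏ i, (∫⁻ x, 2⁻¹ * ‖fderiv ℝ u x (Pi.single i 1)‖ₑ) ^
          (1 / ((Fintype.card ι : ℝ) - 1)) :=
        lintegral_prod_lintegral_update_rpow_le (fun _ ↦ volume) (by positivity)
          (mul_one_div_cancel hι'.ne') fun i ↦ (hmeas i).const_mul _
    _ = ∏ i, (2⁻¹ * ∫⁻ x, ‖fderiv ℝ u x (Pi.single i 1)‖ₑ) ^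
          (1 / ((Fintype.card ι : ℝ) - 1)) := by
        simp_rw [lintegral_const_mul _ (hmeas _)]

theorem lintegral_enorm_rpow_le_prod_lintegral_fderiv [DecidableEq ι] (hι : 1 < Fintype.card ι)
    {u : EuclideanSpace ℝ ι → F} (hu : ContDiff ℝ 1 u) (h2u : HasCompactSupport u) :
    ∫⁻ x, ‖u x‖ₑ ^ ((Fintype.card ι : ℝ) / (Fintype.card ι - 1)) ≤
      ∏ i, (2⁻¹ * ∫⁻ x, ‖fderiv ℝ u x (EuclideanSpace.single i 1)‖ₑ) ^
        (1 / ((Fintype.card ι : ℝ) - 1)) := by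
  let e : (ι → ℝ) ≃L[ℝ] EuclideanSpace ℝ ι := (EuclideanSpace.equiv ι ℝ).symm
  have he : MeasurePreserving e := PiLp.volume_preserving_toLp ι
  have hmeas : ∀ i, Measurable fun x ↦ ‖fderiv ℝ u x (EuclideanSpace.single i 1)‖ₑ := fun i ↦
    ((hu.continuous_fderiv one_ne_zero).clm_apply continuous_const).enorm.measurable
  have hfderiv : ∀ x i, fderiv ℝ (u ∘ e) x (Pi.single i 1) =
      fderiv ℝ u (e x) (EuclideanSpace.single i 1) := fun x i ↦ by
    rw [fderiv_comp _ (hu.differentiable one_ne_zero _) e.differentiableAt, e.fderiv]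
    rfl
  have hpi := lintegral_enorm_rpow_le_prod_lintegral_fderiv_pi hι (hu.comp e.contDiff)
    (h2u.comp_homeomorph e.toHomeomorph)
  simp_rw [hfderiv, fun i ↦ he.lintegral_comp (hmeas i)] at hpi
  rwa [← he.lintegral_comp (hu.continuous.enorm.measurable.pow_const _)]

end LoomisWhitney

section ArithMean

open scoped ENNReal NNReal

theorem prod_rpow_le_sum_coe_mul {ι : Type*} (s : Finset ι) (w : ι → ℝ≥0) (z : ι → ℝ≥0∞)
    (hw : ∑ i ∈ s, w i = 1) : ∏ i ∈ s, z i ^ (w i : ℝ) ≤ ∑ i ∈ s, w i * z i := by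
  by_cases htop : ∃ i ∈ s, w i ≠ 0 ∧ z i = ∞
  · obtain ⟨i, hi, hwi, hzi⟩ := htop
    have hsum : ∑ i ∈ s, w i * z i = ∞ :=
      ENNReal.sum_eq_top.2 ⟨i, hi, by rw [hzi, ENNReal.mul_top (by simpa using hwi)]⟩
    exact hsum ▸ le_top
  · push Not at htop
    -- Where `z i = ∞` the weight vanishes, so both sides only see the finite part of `z`.
    calc ∏ i ∈ s, z i ^ (w i : ℝ) = ∏ i ∈ s, (((z i).toNNReal ^ (w i : ℝ) : ℝ≥0) : ℝ≥0∞) := by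
          refine Finset.prod_congr rfl fun i hi ↦ ?_
          rcases eq_or_ne (w i) 0 with hwi | hwi
          · simp [hwi]
          · rw [ENNReal.coe_rpow_of_nonneg _ (w i).coe_nonneg,
              ENNReal.coe_toNNReal (htop i hi hwi)]
      _ ≤ ∑ i ∈ s, ((w i * (z i).toNNReal : ℝ≥0) : ℝ≥0∞) := by
          exact_mod_cast NNReal.geom_mean_le_arith_mean_weighted s w _ hw
      _ ≤ ∑ i ∈ s, w i * z i := by
          gcongr with i
          rw [ENNReal.coe_mul]
          gcongr
          exact ENNReal.coe_toNNReal_le_self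

theorem sum_norm_apply_orthonormalBasis_le {ι 𝕜 E : Type*} [Fintype ι] [RCLike 𝕜]
    [NormedAddCommGroup E] [InnerProductSpace 𝕜 E] [CompleteSpace E]
    (b : OrthonormalBasis ι 𝕜 E) (L : StrongDual 𝕜 E) :
    ∑ i, ‖L (b i)‖ ≤ √(Fintype.card ι) * ‖L‖ := by
  have hsq : ∑ i, ‖L (b i)‖ ^ 2 = ‖L‖ ^ 2 := by
    simpa using b.sum_sq_norm_inner_left ((InnerProductSpace.toDual 𝕜 E).symm L)
  refine le_of_sq_le_sq ?_ (by positivity)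
  rw [mul_pow, Real.sq_sqrt (Nat.cast_nonneg _), ← hsq]
  exact sq_sum_le_card_mul_sum_sq

end ArithMean

section Sobolev

open scoped ENNReal NNReal

variable {ι : Type*} [Fintype ι]

theorem eLpNorm'_le_sum_lintegral_enorm_fderiv_single [DecidableEq ι] {F : Type*}
    [NormedAddCommGroup F] [NormedSpace ℝ F] [CompleteSpace F] (hι : 1 < Fintype.card ι)
    {u : EuclideanSpace ℝ ι → F} (hu : ContDiff ℝ 1 u) (h2u : HasCompactSupport u) :
    eLpNorm' u ((Fintype.card ι : ℝ) / (Fintype.card ι - 1)) volume ≤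
      ENNReal.ofReal (1 / (2 * Fintype.card ι)) *
        ∑ i, ∫⁻ x, ‖fderiv ℝ u x (EuclideanSpace.single i 1)‖ₑ := by
  set m : ℝ := (Fintype.card ι : ℝ) with hm
  have hm0 : 0 < m - 1 := sub_pos.2 (Nat.one_lt_cast.2 hι)
  have hm_pos : 0 < m := by linarith
  set w : ℝ≥0 := (Fintype.card ι : ℝ≥0)⁻¹ with hw
  have hw_sum : ∑ _i : ι, w = 1 := by
    simpa [hw] using mul_inv_cancel₀ (Nat.cast_ne_zero.2 (by omega : Fintype.card ι ≠ 0))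
  have hw_half : (w : ℝ≥0∞) * 2⁻¹ = ENNReal.ofReal (1 / (2 * m)) := by
    rw [one_div, mul_inv_rev, ENNReal.ofReal_mul (by positivity),
      ENNReal.ofReal_inv_of_pos two_pos, ENNReal.ofReal_ofNat, ENNReal.ofReal,
      Real.toNNReal_inv, hm, Real.toNNReal_natCast]
  calc eLpNorm' u (m / (m - 1)) volume
      ≤ (∏ i, (2⁻¹ * ∫⁻ x, ‖fderiv ℝ u x (EuclideanSpace.single i 1)‖ₑ) ^ (1 / (m - 1))) ^
          (1 / (m / (m - 1))) := by
        rw [eLpNorm'_eq_lintegral_enorm]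
        gcongr
        exact lintegral_enorm_rpow_le_prod_lintegral_fderiv hι hu h2u
    _ = ∏ i, (2⁻¹ * ∫⁻ x, ‖fderiv ℝ u x (EuclideanSpace.single i 1)‖ₑ) ^ (w : ℝ) := by
        have hexp : 1 / (m - 1) * (1 / (m / (m - 1))) = w := by
          rw [hw, NNReal.coe_inv, NNReal.coe_natCast, ← hm]
          field_simp
        simp_rw [← ENNReal.prod_rpow_of_nonneg (by positivity : 0 ≤ 1 / (m / (m - 1))),
          ← ENNReal.rpow_mul, hexp]
    _ ≤ ∑ i, w * (2⁻¹ * ∫⁻ x, ‖fderiv ℝ u x (EuclideanSpace.single i 1)‖ₑ) :=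
        prod_rpow_le_sum_coe_mul _ _ _ hw_sum
    _ = ENNReal.ofReal (1 / (2 * m)) *
          ∑ i, ∫⁻ x, ‖fderiv ℝ u x (EuclideanSpace.single i 1)‖ₑ := by
        simp_rw [← mul_assoc, hw_half, Finset.mul_sum]

theorem eLpNorm'_le_lintegral_enorm_fderiv (hι : 1 < Fintype.card ι)
    {v : EuclideanSpace ℝ ι → ℝ} (hv : ContDiff ℝ 1 v) (h2v : HasCompactSupport v) :
    eLpNorm' v ((Fintype.card ι : ℝ) / (Fintype.card ι - 1)) volume ≤
      ENNReal.ofReal (1 / (2 * √(Fintype.card ι))) * ∫⁻ x, ‖fderiv ℝ v x‖ₑ := by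
  classical
  have hcont : Continuous (fderiv ℝ v) := hv.continuous_fderiv one_ne_zero
  set m : ℝ := (Fintype.card ι : ℝ)
  have hm_pos : 0 < m := zero_lt_one.trans (Nat.one_lt_cast.2 hι)
  have hsum : ∀ x, ∑ i, ‖fderiv ℝ v x (EuclideanSpace.single i 1)‖ₑ ≤
      ENNReal.ofReal √m * ‖fderiv ℝ v x‖ₑ := fun x ↦ by
    simp_rw [← ofReal_norm, ← ENNReal.ofReal_sum_of_nonneg fun _ _ ↦ norm_nonneg _,
      ← ENNReal.ofReal_mul (Real.sqrt_nonneg _)]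
    simpa using ENNReal.ofReal_le_ofReal
      (sum_norm_apply_orthonormalBasis_le (EuclideanSpace.basisFun ι ℝ) (fderiv ℝ v x))
  have hconst : 1 / (2 * m) * √m = 1 / (2 * √m) := by
    field_simp
    exact Real.sq_sqrt hm_pos.le
  calc eLpNorm' v (m / (m - 1)) volume
      ≤ ENNReal.ofReal (1 / (2 * m)) *
          ∑ i, ∫⁻ x, ‖fderiv ℝ v x (EuclideanSpace.single i 1)‖ₑ :=
        eLpNorm'_le_sum_lintegral_enorm_fderiv_single hι hv h2v
    _ = ENNReal.ofReal (1 / (2 * m)) *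
          ∫⁻ x, ∑ i, ‖fderiv ℝ v x (EuclideanSpace.single i 1)‖ₑ := by
        rw [lintegral_finsetSum _ fun i _ ↦ (hcont.clm_apply continuous_const).enorm.measurable]
    _ ≤ ENNReal.ofReal (1 / (2 * m)) * ∫⁻ x, ENNReal.ofReal √m * ‖fderiv ℝ v x‖ₑ := by
        gcongr with x
        exact hsum x
    _ = ENNReal.ofReal (1 / (2 * √m)) * ∫⁻ x, ‖fderiv ℝ v x‖ₑ := by
        rw [lintegral_const_mul _ hcont.enorm.measurable, ← mul_assoc,
          ← ENNReal.ofReal_mul (by positivity), hconst]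

variable {F : Type*} [NormedAddCommGroup F] [InnerProductSpace ℝ F]

theorem lintegral_enorm_fderiv_norm_rpow_le {E : Type*} [NormedAddCommGroup E] [NormedSpace ℝ E]
    [MeasurableSpace E] [BorelSpace E] (μ : Measure E) {u : E → F} (hu : ContDiff ℝ 1 u)
    {γ : ℝ} (hγ : 1 < γ) {q q' : ℝ} (hq : q'.HolderConjugate q) :
    ∫⁻ x, ‖fderiv ℝ (fun y ↦ ‖u y‖ ^ γ) x‖ₑ ∂μ ≤
      ENNReal.ofReal γ * ((∫⁻ x, ‖u x‖ₑ ^ ((γ - 1) * q') ∂μ) ^ (1 / q') *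
        eLpNorm' (fderiv ℝ u) q μ) := by
  have hmu : Measurable fun x ↦ ‖u x‖ₑ ^ (γ - 1) := hu.continuous.enorm.measurable.pow_const _
  have hmDu : Measurable fun x ↦ ‖fderiv ℝ u x‖ₑ :=
    (hu.continuous_fderiv one_ne_zero).enorm.measurable
  calc ∫⁻ x, ‖fderiv ℝ (fun y ↦ ‖u y‖ ^ γ) x‖ₑ ∂μ
      ≤ ∫⁻ x, ENNReal.ofReal γ * (‖u x‖ₑ ^ (γ - 1) * ‖fderiv ℝ u x‖ₑ) ∂μ := by
        gcongr with x
        lift γ to ℝ≥0 using by positivity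
        rw [ENNReal.ofReal_coe_nnreal, ← mul_assoc]
        exact enorm_fderiv_norm_rpow_le (hu.differentiable one_ne_zero) hγ
    _ = ENNReal.ofReal γ * ∫⁻ x, ‖u x‖ₑ ^ (γ - 1) * ‖fderiv ℝ u x‖ₑ ∂μ :=
        lintegral_const_mul _ (hmu.mul hmDu)
    _ ≤ ENNReal.ofReal γ * ((∫⁻ x, ‖u x‖ₑ ^ ((γ - 1) * q') ∂μ) ^ (1 / q') *
          eLpNorm' (fderiv ℝ u) q μ) := by
        simp_rw [ENNReal.rpow_mul]
        gcongr
        exact ENNReal.lintegral_mul_le_Lp_mul_Lq μ hq hmu.aemeasurable hmDu.aemeasurable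

theorem eLpNorm'_lt_top_of_hasCompactSupport {X : Type*} [TopologicalSpace X]
    [MeasurableSpace X] [OpensMeasurableSpace X] {μ : Measure X} [IsFiniteMeasureOnCompacts μ]
    {G : Type*} [NormedAddCommGroup G] {f : X → G} (hf : Continuous f) (h2f : HasCompactSupport f)
    {q : ℝ} (hq : 0 < q) : eLpNorm' f q μ < ∞ := by
  have hmem := (hf.memLp_of_hasCompactSupport (μ := μ) (p := ENNReal.ofReal q) h2f).eLpNorm_lt_top
  rwa [eLpNorm_eq_eLpNorm' (by simpa using hq) (by simp), ENNReal.toReal_ofReal hq.le] at hmem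

/-- A (non-optimal) constant in the Sobolev inequality `‖u‖_{nq/(n-q)} ≤ C ‖∇u‖_q` on `ℝⁿ`:
the one obtained by applying `‖v‖_{n/(n-1)} ≤ ‖∇v‖₁ / (2√n)` to `v = |u| ^ (q(n-1)/(n-q))`. -/
def sobolevConst (n : ℕ) (q : ℝ) : ℝ := q * (n - 1) / (2 * √n * (n - q))

theorem sobolevConst_nonneg {n : ℕ} {q : ℝ} (hq : 1 ≤ q) (hqn : q ≤ n) : 0 ≤ sobolevConst n q :=
  div_nonneg (mul_nonneg (by linarith) (by linarith))
    (mul_nonneg (by positivity) (sub_nonneg.2 hqn))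

theorem sobolevConst_two (n : ℕ) : sobolevConst n 2 = (n - 1) / (√n * (n - 2)) := by
  rw [sobolevConst, mul_assoc, mul_div_mul_left _ _ two_ne_zero]

theorem lintegral_enorm_rpow_rpow_le (hι : 1 < Fintype.card ι) {u : EuclideanSpace ℝ ι → F}
    (hu : ContDiff ℝ 1 u) (h2u : HasCompactSupport u) {q q' r γ : ℝ} (hq : q'.HolderConjugate q)
    (hγ : 1 < γ) (hγr : γ * ((Fintype.card ι : ℝ) / (Fintype.card ι - 1)) = r)
    (hγr' : (γ - 1) * q' = r) :
    (∫⁻ x, ‖u x‖ₑ ^ r) ^ (1 / ((Fintype.card ι : ℝ) / (Fintype.card ι - 1))) ≤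
      ENNReal.ofReal (γ / (2 * √(Fintype.card ι))) *
        ((∫⁻ x, ‖u x‖ₑ ^ r) ^ (1 / q') * eLpNorm' (fderiv ℝ u) q volume) := by
  set m : ℝ := (Fintype.card ι : ℝ)
  have hpow : ∀ x, ‖u x‖ₑ ^ r = ‖‖u x‖ ^ γ‖ₑ ^ (m / (m - 1)) := fun x ↦ by
    rw [Real.enorm_rpow_of_nonneg (norm_nonneg _) (zero_le_one.trans hγ.le), enorm_norm,
      ← ENNReal.rpow_mul, hγr]
  calc (∫⁻ x, ‖u x‖ₑ ^ r) ^ (1 / (m / (m - 1)))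
      = eLpNorm' (fun x ↦ ‖u x‖ ^ γ) (m / (m - 1)) volume := by
        simp_rw [hpow, eLpNorm'_eq_lintegral_enorm]
    _ ≤ ENNReal.ofReal (1 / (2 * √m)) * ∫⁻ x, ‖fderiv ℝ (fun y ↦ ‖u y‖ ^ γ) x‖ₑ :=
        eLpNorm'_le_lintegral_enorm_fderiv hι (hu.norm_rpow hγ)
          (h2u.norm.rpow_const (by positivity))
    _ ≤ ENNReal.ofReal (1 / (2 * √m)) * (ENNReal.ofReal γ *
          ((∫⁻ x, ‖u x‖ₑ ^ r) ^ (1 / q') * eLpNorm' (fderiv ℝ u) q volume)) := by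
        gcongr ENNReal.ofReal _ * ?_
        simpa only [hγr'] using lintegral_enorm_fderiv_norm_rpow_le volume hu hγ hq
    _ = ENNReal.ofReal (γ / (2 * √m)) *
          ((∫⁻ x, ‖u x‖ₑ ^ r) ^ (1 / q') * eLpNorm' (fderiv ℝ u) q volume) := by
        rw [← mul_assoc, ← ENNReal.ofReal_mul (by positivity), one_div_mul_eq_div]

theorem rpow_le_mul_of_rpow_add_le {x y c : ℝ≥0∞} {a b : ℝ} (hx : x ≠ ∞) (ha : 0 < a)
    (h : x ^ (a + b) ≤ c * (x ^ b * y)) : x ^ a ≤ c * y := by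
  rcases eq_or_ne x 0 with rfl | hx0
  · simp [ha]
  rw [ENNReal.rpow_add _ _ hx0 hx, mul_left_comm, mul_comm] at h
  exact (ENNReal.mul_le_mul_iff_right (by simp [hx0, hx]) (by simp [hx0, hx])).1 h

theorem eLpNorm'_le_eLpNorm'_fderiv {u : EuclideanSpace ℝ ι → F} (hu : ContDiff ℝ 1 u)
    (h2u : HasCompactSupport u) {q r : ℝ} (hq : 1 < q) (hqι : q < Fintype.card ι)
    (hr : 1 / r = 1 / q - 1 / Fintype.card ι) :
    eLpNorm' u r volume ≤
      ENNReal.ofReal (sobolevConst (Fintype.card ι) q) * eLpNorm' (fderiv ℝ u) q volume := by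
  have hι : 1 < Fintype.card ι := by exact_mod_cast hq.trans hqι
  have hq' : q.conjExponent.HolderConjugate q := (Real.HolderConjugate.conjExponent hq).symm
  set m : ℝ := (Fintype.card ι : ℝ)
  have hm0 : 0 < m := by linarith
  have hm1 : 0 < m - 1 := by linarith
  have hmq : 0 < m - q := sub_pos.2 hqι
  have hq1 : 0 < q - 1 := sub_pos.2 hq
  have hr_eq : r = m * q / (m - q) := by
    rw [← one_div_one_div r, hr, div_sub_div _ _ (by positivity) (by positivity), one_div_div,
      one_mul, mul_one, mul_comm]
  have hr0 : 0 < r := by rw [hr_eq]; positivity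
  have hexp : 1 / (m / (m - 1)) = 1 / r + 1 / q.conjExponent := by
    rw [hr, Real.conjExponent]
    field_simp
    ring
  -- `γ` is chosen so that `γ n / (n - 1)` and `(γ - 1) q'` are both the Sobolev exponent `r`.
  let γ : ℝ := q * (m - 1) / (m - q)
  have hγ : 1 < γ := (one_lt_div hmq).2 (by nlinarith)
  have hγr : γ * (m / (m - 1)) = r := by
    simp only [γ, hr_eq]
    field_simp
  have hγr' : (γ - 1) * q.conjExponent = r := by
    simp only [γ, hr_eq, Real.conjExponent]
    field_simp
    ring
  have hconst : γ / (2 * √m) = sobolevConst (Fintype.card ι) q := by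
    rw [div_div, mul_comm (m - q), sobolevConst]
  have hnorm := lintegral_enorm_rpow_rpow_le hι hu h2u hq' hγ hγr hγr'
  rw [eLpNorm'_eq_lintegral_enorm]
  refine rpow_le_mul_of_rpow_add_le ?_ (one_div_pos.2 hr0) (by rwa [hconst, hexp] at hnorm)
  exact (lintegral_rpow_enorm_lt_top_of_eLpNorm'_lt_top hr0
    (eLpNorm'_lt_top_of_hasCompactSupport hu.continuous h2u hr0)).ne

end Sobolev

section Interpolation

open scoped ENNReal NNReal

theorem eLpNorm'_le_eLpNorm'_rpow_mul_eLpNorm'_rpow {α G : Type*} [MeasurableSpace α]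
    {μ : Measure α} [NormedAddCommGroup G] {f : α → G} (hf : AEStronglyMeasurable f μ)
    {p q r a b : ℝ} (hq : 0 < q) (hr : 0 < r) (ha : 0 ≤ a) (hb : 0 ≤ b) (hab : a + b = 1)
    (hp : 1 / p = a / q + b / r) :
    eLpNorm' f p μ ≤ eLpNorm' f q μ ^ a * eLpNorm' f r μ ^ b := by
  have hp0 : 0 < p := by
    rw [← one_div_pos, hp, ← mul_one_div a, ← mul_one_div b]
    exact convex_Ioi (0 : ℝ) (one_div_pos.2 hq) (one_div_pos.2 hr) ha hb hab
  have hsum : p * a / q + p * b / r = 1 := by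
    rw [mul_div_assoc, mul_div_assoc, ← mul_add, ← hp, mul_one_div_cancel hp0.ne']
  have hlintegral : ∫⁻ x, ‖f x‖ₑ ^ p ∂μ ≤
      (∫⁻ x, ‖f x‖ₑ ^ q ∂μ) ^ (p * a / q) * (∫⁻ x, ‖f x‖ₑ ^ r ∂μ) ^ (p * b / r) := by
    refine le_trans (lintegral_mono fun x ↦ le_of_eq ?_)
      (ENNReal.lintegral_mul_norm_pow_le (hf.enorm.pow_const q) (hf.enorm.pow_const r)
        (by positivity) (by positivity) hsum)
    rw [← ENNReal.rpow_mul, ← ENNReal.rpow_mul, mul_div_cancel₀ _ hq.ne',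
      mul_div_cancel₀ _ hr.ne', ← ENNReal.rpow_add_of_nonneg _ _ (by positivity) (by positivity),
      ← mul_add, hab, mul_one]
  calc eLpNorm' f p μ
      ≤ ((∫⁻ x, ‖f x‖ₑ ^ q ∂μ) ^ (p * a / q) *
          (∫⁻ x, ‖f x‖ₑ ^ r ∂μ) ^ (p * b / r)) ^ (1 / p) := by
        rw [eLpNorm'_eq_lintegral_enorm]
        gcongr
    _ = eLpNorm' f q μ ^ a * eLpNorm' f r μ ^ b := by
        rw [ENNReal.mul_rpow_of_nonneg _ _ (by positivity)]
        simp_rw [eLpNorm'_eq_lintegral_enorm, ← ENNReal.rpow_mul]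
        congr 2 <;> field_simp

theorem toReal_eLpNorm' {α G : Type*} [MeasurableSpace α] {μ : Measure α}
    [NormedAddCommGroup G] {f : α → G} (hf : AEStronglyMeasurable f μ) {q : ℝ} (hq : 0 ≤ q) :
    (eLpNorm' f q μ).toReal = (∫ x, ‖f x‖ ^ q ∂μ) ^ (1 / q) := by
  rw [eLpNorm'_eq_lintegral_enorm, ← ENNReal.toReal_rpow, integral_eq_lintegral_of_nonneg_ae
    (.of_forall fun _ ↦ by positivity) (hf.norm.aemeasurable.pow_const q).aestronglyMeasurable]
  simp_rw [← ENNReal.ofReal_rpow_of_nonneg (norm_nonneg _) hq, ofReal_norm]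

variable {ι : Type*} [Fintype ι] {F : Type*} [NormedAddCommGroup F] [InnerProductSpace ℝ F]

theorem eLpNorm'_le_eLpNorm'_rpow_mul_eLpNorm'_fderiv_rpow {u : EuclideanSpace ℝ ι → F}
    (hu : ContDiff ℝ 1 u) (h2u : HasCompactSupport u) {p q r s : ℝ} (hq : 1 < q)
    (hqι : q < Fintype.card ι) (hr : 0 < r) (hs : s ∈ Set.Icc (0 : ℝ) 1)
    (hp : 1 / p = s / r + (1 - s) * (1 / q - 1 / Fintype.card ι)) :
    eLpNorm' u p volume ≤ ENNReal.ofReal (sobolevConst (Fintype.card ι) q) ^ (1 - s) *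
      (eLpNorm' u r volume ^ s * eLpNorm' (fderiv ℝ u) q volume ^ (1 - s)) := by
  have hs' : 0 ≤ 1 - s := sub_nonneg.2 hs.2
  set t : ℝ := (1 / q - 1 / Fintype.card ι)⁻¹ with ht
  have ht0 : 0 < t := inv_pos.2 (sub_pos.2 (one_div_lt_one_div_of_lt (by linarith) hqι))
  calc eLpNorm' u p volume
      ≤ eLpNorm' u r volume ^ s * eLpNorm' u t volume ^ (1 - s) :=
        eLpNorm'_le_eLpNorm'_rpow_mul_eLpNorm'_rpow hu.continuous.aestronglyMeasurable hr ht0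
          hs.1 hs' (add_sub_cancel _ _) (by rw [hp, ht, div_inv_eq_mul])
    _ ≤ eLpNorm' u r volume ^ s * (ENNReal.ofReal (sobolevConst (Fintype.card ι) q) *
          eLpNorm' (fderiv ℝ u) q volume) ^ (1 - s) := by
        gcongr
        exact eLpNorm'_le_eLpNorm'_fderiv hu h2u hq hqι (by rw [ht, one_div, inv_inv])
    _ = ENNReal.ofReal (sobolevConst (Fintype.card ι) q) ^ (1 - s) *
          (eLpNorm' u r volume ^ s * eLpNorm' (fderiv ℝ u) q volume ^ (1 - s)) := by
        rw [ENNReal.mul_rpow_of_nonneg _ _ hs', mul_left_comm]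

theorem integral_norm_rpow_le_mul_integral_norm_fderiv_rpow {u : EuclideanSpace ℝ ι → F}
    (hu : ContDiff ℝ 1 u) (h2u : HasCompactSupport u) {p q r s : ℝ} (hq : 1 < q)
    (hqι : q < Fintype.card ι) (hr : 0 < r) (hs : s ∈ Set.Icc (0 : ℝ) 1)
    (hp : 1 / p = s / r + (1 - s) * (1 / q - 1 / Fintype.card ι)) :
    (∫ x, ‖u x‖ ^ p) ^ (1 / p) ≤ sobolevConst (Fintype.card ι) q ^ (1 - s) *
      (((∫ x, ‖u x‖ ^ r) ^ (1 / r)) ^ s * ((∫ x, ‖fderiv ℝ u x‖ ^ q) ^ (1 / q)) ^ (1 - s)) := by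
  have hq0 : 0 < q := zero_lt_one.trans hq
  have hDu : Continuous (fderiv ℝ u) := hu.continuous_fderiv one_ne_zero
  have hs' : 0 ≤ 1 - s := sub_nonneg.2 hs.2
  have hp0 : 0 < p := by
    rw [← one_div_pos, hp, ← mul_one_div s]
    exact convex_Ioi (0 : ℝ) (one_div_pos.2 hr)
      (sub_pos.2 (one_div_lt_one_div_of_lt hq0 hqι)) hs.1 hs' (add_sub_cancel _ _)
  have hfinite : ENNReal.ofReal (sobolevConst (Fintype.card ι) q) ^ (1 - s) *
      (eLpNorm' u r volume ^ s * eLpNorm' (fderiv ℝ u) q volume ^ (1 - s)) ≠ ∞ :=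
    ENNReal.mul_ne_top (ENNReal.rpow_ne_top_of_nonneg hs' ENNReal.ofReal_ne_top)
      (ENNReal.mul_ne_top
        (ENNReal.rpow_ne_top_of_nonneg hs.1
          (eLpNorm'_lt_top_of_hasCompactSupport hu.continuous h2u hr).ne)
        (ENNReal.rpow_ne_top_of_nonneg hs'
          (eLpNorm'_lt_top_of_hasCompactSupport hDu (h2u.fderiv ℝ) hq0).ne))
  have hGN := ENNReal.toReal_mono hfinite
    (eLpNorm'_le_eLpNorm'_rpow_mul_eLpNorm'_fderiv_rpow hu h2u hq hqι hr hs hp)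
  rwa [ENNReal.toReal_mul, ENNReal.toReal_mul, ← ENNReal.toReal_rpow, ← ENNReal.toReal_rpow,
    ← ENNReal.toReal_rpow, ENNReal.toReal_ofReal (sobolevConst_nonneg hq.le hqι.le),
    toReal_eLpNorm' hu.continuous.aestronglyMeasurable hp0.le,
    toReal_eLpNorm' hu.continuous.aestronglyMeasurable hr.le,
    toReal_eLpNorm' hDu.aestronglyMeasurable hq0.le] at hGN

end Interpolation

section Eigenvalue

open scoped NNReal

theorem exists_integral_norm_rpow_le_mul_integral_norm_fderiv_rpow {E F : Type*}
    [NormedAddCommGroup E] [NormedSpace ℝ E] [FiniteDimensional ℝ E] [MeasurableSpace E]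
    [BorelSpace E] [NormedAddCommGroup F] [NormedSpace ℝ F] [FiniteDimensional ℝ F]
    (μ : Measure E) [μ.IsAddHaarMeasure] {Ω : Set E} (hΩ : Bornology.IsBounded Ω) {p : ℝ}
    (hp : 1 ≤ p) (hpE : p < Module.finrank ℝ E) :
    ∃ C > 0, ∀ u : E → F, ContDiff ℝ 1 u → Function.support u ⊆ Ω →
      ∫ x, ‖u x‖ ^ p ∂μ ≤ C * ∫ x, ‖fderiv ℝ u x‖ ^ p ∂μ := by
  lift p to ℝ≥0 using zero_le_one.trans hp
  have hp0 : (0 : ℝ) < p := zero_lt_one.trans_le hp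
  let c : ℝ≥0 := eLpNormLESNormFDerivOfLeConst F μ Ω p p
  refine ⟨((c : ℝ) + 1) ^ (p : ℝ), by positivity, fun u hu hsub ↦ ?_⟩
  have h2u : HasCompactSupport u := (hΩ.subset hsub).isCompact_closure
  have hDu : Continuous (fderiv ℝ u) := hu.continuous_fderiv one_ne_zero
  have hDu_top : eLpNorm' (fderiv ℝ u) p μ ≠ ⊤ :=
    (eLpNorm'_lt_top_of_hasCompactSupport hDu (h2u.fderiv ℝ) hp0).ne
  have hpoincare : eLpNorm' u p μ ≤ c * eLpNorm' (fderiv ℝ u) p μ := by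
    have h := eLpNorm_le_eLpNorm_fderiv μ hu hsub (p := p) (mod_cast hp) (mod_cast hpE) hΩ
    rwa [eLpNorm_eq_eLpNorm' (mod_cast hp0.ne') ENNReal.coe_ne_top,
      eLpNorm_eq_eLpNorm' (mod_cast hp0.ne') ENNReal.coe_ne_top] at h
  have hreal := ENNReal.toReal_mono (ENNReal.mul_ne_top ENNReal.coe_ne_top hDu_top) hpoincare
  rw [ENNReal.toReal_mul, ENNReal.coe_toReal,
    toReal_eLpNorm' hu.continuous.aestronglyMeasurable hp0.le,
    toReal_eLpNorm' hDu.aestronglyMeasurable hp0.le] at hreal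
  have hu_nonneg : 0 ≤ ∫ x, ‖u x‖ ^ (p : ℝ) ∂μ := integral_nonneg fun _ ↦ by positivity
  have hDu_nonneg : 0 ≤ ∫ x, ‖fderiv ℝ u x‖ ^ (p : ℝ) ∂μ := integral_nonneg fun _ ↦ by positivity
  calc ∫ x, ‖u x‖ ^ (p : ℝ) ∂μ = ((∫ x, ‖u x‖ ^ (p : ℝ) ∂μ) ^ (1 / (p : ℝ))) ^ (p : ℝ) := by
        rw [one_div, Real.rpow_inv_rpow hu_nonneg hp0.ne']
    _ ≤ (((c : ℝ) + 1) * (∫ x, ‖fderiv ℝ u x‖ ^ (p : ℝ) ∂μ) ^ (1 / (p : ℝ))) ^ (p : ℝ) := by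
        gcongr
        exact hreal.trans (by gcongr; linarith)
    _ = ((c : ℝ) + 1) ^ (p : ℝ) * ∫ x, ‖fderiv ℝ u x‖ ^ (p : ℝ) ∂μ := by
        rw [Real.mul_rpow (by positivity) (by positivity), one_div,
          Real.rpow_inv_rpow hDu_nonneg hp0.ne']

theorem norm_gradient {𝕜 E : Type*} [RCLike 𝕜] [NormedAddCommGroup E] [InnerProductSpace 𝕜 E]
    [CompleteSpace E] (f : E → 𝕜) (x : E) : ‖gradient f x‖ = ‖fderiv 𝕜 f x‖ :=
  LinearIsometryEquiv.norm_map _ _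

theorem gradient_of_notMem_tsupport {𝕜 E : Type*} [RCLike 𝕜] [NormedAddCommGroup E]
    [InnerProductSpace 𝕜 E] [CompleteSpace E] {f : E → 𝕜} {x : E} (hx : x ∉ tsupport f) :
    gradient f x = 0 := by
  rw [← norm_eq_zero, norm_gradient, fderiv_of_notMem_tsupport 𝕜 hx, norm_zero]

variable {n : ℕ} {Ω : Set (EuclideanSpace ℝ (Fin n))}

theorem nonneg_of_mem_rayleighSet {r : ℝ} (hr : r ∈ RayleighSet n Ω) : 0 ≤ r := by
  obtain ⟨u, -, -, -, -, rfl⟩ := hr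
  exact div_nonneg (integral_nonneg fun _ ↦ by positivity) (integral_nonneg fun _ ↦ by positivity)

theorem rayleighSet_nonempty (hΩo : IsOpen Ω) (hΩ : Ω.Nonempty) : (RayleighSet n Ω).Nonempty := by
  obtain ⟨x, hx⟩ := hΩ
  obtain ⟨u, hsub, hsupp, hu, -, hux⟩ :=
    exists_contDiff_tsupport_subset (n := ⊤) (hΩo.mem_nhds hx)
  have hsq : HasCompactSupport fun y ↦ u y ^ 2 := hsupp.comp_left (zero_pow two_ne_zero)
  have hpos : 0 < ∫ y, u y ^ 2 :=
    (hu.continuous.pow 2).integral_pos_of_hasCompactSupport_nonneg_nonzero hsq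
      (fun _ ↦ sq_nonneg _) (x := x) (by simp [hux])
  exact ⟨_, u, hu, hsupp, hsub, hpos.ne', rfl⟩

theorem lam1_mul_integral_sq_le {u : EuclideanSpace ℝ (Fin n) → ℝ}
    (hu : ContDiff ℝ (⊤ : ℕ∞) u) (hsupp : HasCompactSupport u) (hsub : tsupport u ⊆ Ω) :
    lam1 n Ω * ∫ x, u x ^ 2 ≤ ∫ x, ‖gradient u x‖ ^ 2 := by
  rcases (integral_nonneg fun x ↦ sq_nonneg (u x) : 0 ≤ ∫ x, u x ^ 2).eq_or_lt'
    with h0 | hpos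
  · rw [h0, mul_zero]
    exact integral_nonneg fun _ ↦ by positivity
  · rw [← le_div_iff₀ hpos]
    exact csInf_le ⟨0, fun _ ↦ nonneg_of_mem_rayleighSet⟩ ⟨u, hu, hsupp, hsub, hpos.ne', rfl⟩

theorem lam1_pos (hn : 3 ≤ n) (hΩo : IsOpen Ω) (hΩ : Ω.Nonempty) (hΩb : Bornology.IsBounded Ω) :
    0 < lam1 n Ω := by
  obtain ⟨C, hC, hpoincare⟩ := exists_integral_norm_rpow_le_mul_integral_norm_fderiv_rpow
    (F := ℝ) volume hΩb one_le_two (by simpa using (by exact_mod_cast hn : (2 : ℝ) < n))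
  refine (inv_pos.2 hC).trans_le (le_csInf (rayleighSet_nonempty hΩo hΩ) ?_)
  rintro r ⟨u, hu, -, hsub, hu0, rfl⟩
  have hpos : 0 < ∫ x, u x ^ 2 :=
    lt_of_le_of_ne' (integral_nonneg fun x ↦ sq_nonneg (u x)) hu0
  rw [le_div_iff₀ hpos, inv_mul_le_iff₀ hC]
  simpa [norm_gradient] using
    hpoincare u (hu.of_le (mod_cast le_top)) ((subset_tsupport u).trans hsub)

end Eigenvalue

theorem sqrt_rpow_mul_sqrt_rpow_le {A B lam s τ : ℝ} (hA : 0 ≤ A) (hB : 0 ≤ B)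
    (hAB : lam * B ≤ A) (hs : s ∈ Set.Icc (0 : ℝ) 1) (hτ : 0 ≤ s * lam + τ)
    (hne : s ≠ 0 → s * lam + τ ≠ 0) :
    √B ^ s * √A ^ (1 - s) ≤ (s / (s * lam + τ)) ^ (s / 2) * √(A + τ * B) := by
  obtain ⟨hs0, hs1⟩ := hs
  rcases hs0.eq_or_lt with rfl | hs_pos
  · have hτB : 0 ≤ τ * B := mul_nonneg (by simpa using hτ) hB
    simpa using Real.sqrt_le_sqrt (le_add_of_nonneg_right hτB)
  set D := s * lam + τ
  have hD : 0 < D := hτ.lt_of_ne' (hne hs_pos.ne')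
  have hs_sub : 0 ≤ 1 - s := sub_nonneg.2 hs1
  have hmean : (D / s * B) ^ s * A ^ (1 - s) ≤ A + τ * B := calc
    (D / s * B) ^ s * A ^ (1 - s) ≤ s * (D / s * B) + (1 - s) * A :=
      Real.geom_mean_le_arith_mean2_weighted hs0 hs_sub (by positivity) hA (by ring)
    _ = A + τ * B + s * (lam * B - A) := by
      simp only [D]
      field_simp
      ring
    _ ≤ A + τ * B := by nlinarith
  have hsqrt : ∀ x t : ℝ, 0 ≤ x → √(x ^ t) = √x ^ t := fun x t hx ↦ by
    rw [Real.sqrt_eq_rpow, Real.sqrt_eq_rpow, ← Real.rpow_mul hx, ← Real.rpow_mul hx, mul_comm]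
  calc √B ^ s * √A ^ (1 - s)
      = √(s / D * (D / s * B)) ^ s * √A ^ (1 - s) := by
        rw [← mul_assoc, div_mul_div_cancel₀' hs_pos.ne', div_self hD.ne', one_mul]
    _ = (s / D) ^ (s / 2) * √((D / s * B) ^ s * A ^ (1 - s)) := by
        rw [Real.sqrt_mul (x := s / D) (by positivity), Real.mul_rpow (by positivity)
          (by positivity), Real.sqrt_mul (x := (D / s * B) ^ s) (by positivity),
          hsqrt _ _ (by positivity), hsqrt _ _ hA, Real.rpow_div_two_eq_sqrt _ (by positivity),
          mul_assoc]
    _ ≤ (s / D) ^ (s / 2) * √(A + τ * B) := by gcongr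

theorem stmt15_general {n : ℕ} (hn : 3 ≤ n) {Ω : Set (EuclideanSpace ℝ (Fin n))} {p s τ : ℝ}
    (hs : s = (n : ℝ) * (1 / p - 1 / 2 + 1 / (n : ℝ))) (hs01 : s ∈ Set.Icc (0 : ℝ) 1)
    (hτ : 0 ≤ s * lam1 n Ω + τ) (hne : s ≠ 0 → s * lam1 n Ω + τ ≠ 0)
    {u : EuclideanSpace ℝ (Fin n) → ℝ}
    (hu : ContDiff ℝ (⊤ : ℕ∞) u) (hsupp : HasCompactSupport u) (hsub : tsupport u ⊆ Ω) :
    (∫ x in Ω, |u x| ^ p) ^ (1 / p) ≤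
      (((n : ℝ) - 1) / (√n * ((n : ℝ) - 2))) ^ (1 - s) *
        (s / (s * lam1 n Ω + τ)) ^ (s / 2) *
        √((∫ x in Ω, ‖gradient u x‖ ^ 2) + τ * ∫ x in Ω, (u x) ^ 2) := by
  have hn2 : (2 : ℝ) < n := by exact_mod_cast hn
  have hp : 1 / p = s / 2 + (1 - s) * (1 / 2 - 1 / n) := by
    rw [hs]
    field_simp
    ring
  have hp0 : 0 < p := by
    rw [← one_div_pos, hp, ← mul_one_div s]
    exact convex_Ioi (0 : ℝ) one_half_pos (sub_pos.2 (one_div_lt_one_div_of_lt two_pos hn2))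
      hs01.1 (sub_nonneg.2 hs01.2) (add_sub_cancel _ _)
  have hu0 : ∀ x ∉ Ω, u x = 0 := fun x hx ↦ image_eq_zero_of_notMem_tsupport (hx <| hsub ·)
  have hgrad0 : ∀ x ∉ Ω, gradient u x = 0 := fun x hx ↦
    gradient_of_notMem_tsupport (hx <| hsub ·)
  rw [setIntegral_eq_integral_of_forall_compl_eq_zero fun x hx ↦ by simp [hu0 x hx, hp0.ne'],
    setIntegral_eq_integral_of_forall_compl_eq_zero fun x hx ↦ by simp [hgrad0 x hx],
    setIntegral_eq_integral_of_forall_compl_eq_zero fun x hx ↦ by simp [hu0 x hx],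
    ← sobolevConst_two, mul_assoc]
  calc (∫ x, |u x| ^ p) ^ (1 / p)
      ≤ sobolevConst n 2 ^ (1 - s) *
          (√(∫ x, u x ^ 2) ^ s * √(∫ x, ‖gradient u x‖ ^ 2) ^ (1 - s)) := by
        simpa [Real.sqrt_eq_rpow, norm_gradient] using
          integral_norm_rpow_le_mul_integral_norm_fderiv_rpow (hu.of_le (mod_cast le_top)) hsupp
            one_lt_two (by simpa using hn2) two_pos hs01 (by simpa using hp)
    _ ≤ sobolevConst n 2 ^ (1 - s) * ((s / (s * lam1 n Ω + τ)) ^ (s / 2) *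
          √((∫ x, ‖gradient u x‖ ^ 2) + τ * ∫ x, u x ^ 2)) := by
        refine mul_le_mul_of_nonneg_left (sqrt_rpow_mul_sqrt_rpow_le ?_ ?_
          (lam1_mul_integral_sq_le hu hsupp hsub) hs01 hτ hne)
          (Real.rpow_nonneg (sobolevConst_nonneg one_le_two hn2.le) _) <;>
        exact integral_nonneg fun _ ↦ by positivity

/-- **Plum's explicit embedding constant `H₀¹(Ω) ↪ L^p(Ω)` for `n ≥ 3`.**
Let `n ≥ 3`, `p ∈ [2, 2n/(n−2)]`, `s := n(1/p − 1/2 + 1/n) ∈ [0,1]`, `τ ≥ 0`, and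
`Ω ⊂ ℝⁿ` a bounded domain with first Dirichlet Laplacian eigenvalue `λ₁`.  Then for
every `u ∈ H₀¹(Ω)` (represented by smooth functions compactly supported in `Ω`),
`‖u‖_{L^p(Ω)} ≤ ((n−1)/(√n (n−2)))^{1−s} (s/(sλ₁+τ))^{s/2} ‖u‖_V`,
with `‖u‖_V² = ‖∇u‖²_{L²} + τ‖u‖²_{L²}`. -/
theorem stmt15 {n : ℕ} (hn : 3 ≤ n) (Ω : Set (EuclideanSpace ℝ (Fin n)))
    (hΩo : IsOpen Ω) (hΩc : IsConnected Ω) (hΩb : Bornology.IsBounded Ω)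
    (p : ℝ) (hp : p ∈ Set.Icc (2 : ℝ) (2 * (n : ℝ) / ((n : ℝ) - 2)))
    (s : ℝ) (hs : s = (n : ℝ) * (1/p - 1/2 + 1/(n : ℝ))) (hs01 : s ∈ Set.Icc (0:ℝ) 1)
    (τ : ℝ) (hτ : 0 ≤ τ)
    (u : EuclideanSpace ℝ (Fin n) → ℝ)
    (hu : ContDiff ℝ (⊤ : ℕ∞) u) (hsupp : HasCompactSupport u) (hsub : tsupport u ⊆ Ω) :
    (∫ x in Ω, |u x| ^ p) ^ (1/p) ≤
      (((n : ℝ) - 1) / (Real.sqrt n * ((n : ℝ) - 2))) ^ (1 - s) *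
        (s / (s * lam1 n Ω + τ)) ^ (s/2) *
        Real.sqrt ((∫ x in Ω, ‖gradient u x‖ ^ 2) + τ * ∫ x in Ω, (u x) ^ 2) := by
  have hlam := lam1_pos hn hΩo hΩc.nonempty hΩb
  exact stmt15_general hn hs hs01 (add_nonneg (mul_nonneg hs01.1 hlam.le) hτ)
    (fun hs0 ↦ (add_pos_of_pos_of_nonneg (mul_pos (hs01.1.lt_of_ne' hs0) hlam) hτ).ne')
    hu hsupp hsub

end
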